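/- arXiv:1709.05025 — 2 statements merged into one kernel-verified Lean document; each statement's English description precedes it below -/
import Mathlib

section
/- The image in PGL(3,ℂ) of the subgroup ⟨σ, τ, λ₃₀⟩ ⊆ GL(3,ℂ) under the canonical projection GL(3,ℂ) → PGL(3,ℂ) is isomorphic to SL(2,5) × ℤ/15 and has order 1800. -/
noncomputable section
open Matrix

def zeta5 : ℂ := Complex.exp (2 * Real.pi * Complex.I / 5)

def sqrt5 : ℂ := zeta5 - zeta5 ^ 2 - zeta5 ^ 3 + zeta5 ^ 4

def alpha : Matrix (Fin 2) (Fin 2) ℂ := -(Matrix.of ![![zeta5 ^ 3, 0], ![0, zeta5 ^ 2]])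
def beta : Matrix (Fin 2) (Fin 2) ℂ := Matrix.of ![![0, 1], ![-1, 0]]
def gamma : Matrix (Fin 2) (Fin 2) ℂ :=
  (zeta5 ^ 2 - zeta5 ^ 3)⁻¹ •
    Matrix.of ![![zeta5 + zeta5⁻¹, 1], ![1, -(zeta5 + zeta5⁻¹)]]

/-- The block-diagonal embedding of a `2 × 2` matrix into `GL(3)`, with last diagonal entry 1. -/
def emb (A : Matrix (Fin 2) (Fin 2) ℂ) : Matrix (Fin 3) (Fin 3) ℂ :=
  Matrix.of ![![A 0 0, A 0 1, 0], ![A 1 0, A 1 1, 0], ![0, 0, 1]]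

def alpha' : Matrix (Fin 3) (Fin 3) ℂ := emb alpha
def beta' : Matrix (Fin 3) (Fin 3) ℂ := emb beta
def gamma' : Matrix (Fin 3) (Fin 3) ℂ := emb gamma

def sigma : Matrix (Fin 3) (Fin 3) ℂ :=
  Matrix.of ![![(zeta5 - zeta5 ^ 4) / sqrt5, (zeta5 ^ 3 - zeta5 ^ 2) / sqrt5, 0],
    ![(zeta5 ^ 3 - zeta5 ^ 2) / sqrt5, -((zeta5 - zeta5 ^ 4) / sqrt5), 0],
    ![0, 0, 1]]

def tau : Matrix (Fin 3) (Fin 3) ℂ := Matrix.diagonal ![zeta5, 1, 1]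

def rho : Matrix (Fin 3) (Fin 3) ℂ := Matrix.diagonal ![zeta5 ^ 3, zeta5 ^ 2, 1]

/-- The subgroup of `GL(3, ℂ)` generated by the invertible matrices in `S`. -/
def gen3 (S : Set (Matrix (Fin 3) (Fin 3) ℂ)) : Subgroup (GL (Fin 3) ℂ) :=
  Subgroup.closure {g : GL (Fin 3) ℂ | (g : Matrix (Fin 3) (Fin 3) ℂ) ∈ S}

/-- `S(2,1) = ⟨α', β', γ'⟩`. -/
def S21 : Subgroup (GL (Fin 3) ℂ) := gen3 {alpha', beta', gamma'}

abbrev SL25 := Matrix.SpecialLinearGroup (Fin 2) (ZMod 5)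

/-- The subgroup of nonzero scalar matrices in `GL(3, ℂ)`. -/
def scalarSub : Subgroup (GL (Fin 3) ℂ) :=
  (Units.map (algebraMap ℂ (Matrix (Fin 3) (Fin 3) ℂ)).toMonoidHom).range

instance : scalarSub.Normal := by
  constructor
  rintro n ⟨c, rfl⟩ g
  refine ⟨c, ?_⟩
  ext
  simp only [Units.coe_map, RingHom.toMonoidHom_eq_coe, MonoidHom.coe_coe, Units.val_mul]
  rw [← Algebra.commutes (↑c : ℂ) (↑g : Matrix (Fin 3) (Fin 3) ℂ), mul_assoc,
    ← Units.val_mul, mul_inv_cancel, Units.val_one, mul_one]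

/-- `PGL(3, ℂ)`: the quotient of `GL(3, ℂ)` by the nonzero scalar matrices. -/
abbrev PGL3 := GL (Fin 3) ℂ ⧸ scalarSub

def lambda30 : Matrix (Fin 3) (Fin 3) ℂ :=
  Matrix.diagonal ![1, 1, Complex.exp (2 * Real.pi * Complex.I / 30)]

/-- `⟨σ, τ, λ₃₀⟩`. -/
def Gt30 : Subgroup (GL (Fin 3) ℂ) := gen3 {sigma, tau, lambda30}

/-!
Functions on `ℤ/5` carry the Weil representation of `SL(2, 5)` attached to `x ↦ ζ₅ ^ x`. Its odd
part is two-dimensional, and in suitable coordinates the Weyl element `S = (0, -1; 1, 0)` acts by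
the upper left block of `σ` and the transvection `T = (1, 1; 0, 1)` by `diag(ζ₅³, ζ₅²)`. This
representation is faithful because `PSL(2, 5)` is simple and `-1` acts as `-1`, and it is
unimodular because `SL(2, 5)` is perfect. Hence it stays faithful when twisted by the `15`-th roots
of unity, `15` being coprime to the dimension `2`, and even its block embedding in `PGL(3, ℂ)` is
faithful, since the last diagonal entry is always `1`. Modulo scalars, `σ`, `τ` and `λ₃₀` are the
images of `(S, 0)`, `(T, 9)` and `(-1, 7)`, which generate `SL(2, 5) × ℤ/15`.
-/

section GroupTheory

theorem monoidHom_eq_one_of_isPerfect {G H : Type*} [Group G] [Group.IsPerfect G] [CommGroup H]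
    (f : G →* H) : f = 1 := by
  rw [← MonoidHom.ker_eq_top_iff, eq_top_iff, ← Group.IsPerfect.commutator_eq_top (G := G)]
  exact Abelianization.commutator_subset_ker f

variable {G : Type*} [Group G]

theorem le_center_or_eq_top_of_normal [Group.IsPerfect G]
    [IsSimpleGroup (G ⧸ Subgroup.center G)] (N : Subgroup G) [N.Normal] :
    N ≤ Subgroup.center G ∨ N = ⊤ := by
  have hmap : (N.map (QuotientGroup.mk' (Subgroup.center G))).Normal :=
    Subgroup.Normal.map inferInstance _ (QuotientGroup.mk'_surjective _)
  refine hmap.eq_bot_or_eq_top.imp (fun hbot => ?_) fun htop => ?_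
  · rwa [Subgroup.map_eq_bot_iff, QuotientGroup.ker_mk'] at hbot
  · have hsup : N ⊔ Subgroup.center G = ⊤ := by
      rw [← QuotientGroup.ker_mk' (Subgroup.center G), ← Subgroup.comap_map_eq, htop,
        Subgroup.comap_top]
    have hcentral (x : G ⧸ N) : ∃ z ∈ Subgroup.center G, (z : G ⧸ N) = x := by
      obtain ⟨g, rfl⟩ := QuotientGroup.mk_surjective x
      have hg : g ∈ N ⊔ Subgroup.center G := hsup ▸ Subgroup.mem_top g
      obtain ⟨n, hn, z, hz, rfl⟩ := Subgroup.mem_sup_of_normal_left.mp hg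
      exact ⟨z, hz, by rw [QuotientGroup.mk_mul, (QuotientGroup.eq_one_iff n).mpr hn, one_mul]⟩
    have hcomm : IsMulCommutative (G ⧸ N) := ⟨⟨fun x y => by
      obtain ⟨z, hz, rfl⟩ := hcentral x
      obtain ⟨g, rfl⟩ := QuotientGroup.mk_surjective y
      rw [← QuotientGroup.mk_mul, ← QuotientGroup.mk_mul, Subgroup.mem_center_iff.mp hz g]⟩⟩
    exact QuotientGroup.subsingleton_iff.mp Group.IsPerfect.subsingleton_of_isMulCommutative

theorem eq_top_of_map_fst_eq_top {H : Type*} [Group H] {K : Subgroup (G × H)}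
    (hfst : K.map (MonoidHom.fst G H) = ⊤) (hsnd : ∀ h, (1, h) ∈ K) : K = ⊤ := by
  rw [Subgroup.eq_top_iff']
  rintro ⟨g, h⟩
  obtain ⟨⟨_, h'⟩, hmem, rfl⟩ : g ∈ K.map (MonoidHom.fst G H) := hfst ▸ Subgroup.mem_top g
  simpa using K.mul_mem hmem (hsnd (h'⁻¹ * h))

end GroupTheory

section QuadraticGaussSum

variable (F : Type*) [Field F] [Fintype F] [DecidableEq F]

/-- The quadratic character of a finite field, with values in `ℂ`. -/
def complexQuadraticChar : MulChar F ℂ :=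
  (quadraticChar F).ringHomComp (Int.castRingHom ℂ)

variable {F}

theorem complexQuadraticChar_apply (a : F) : complexQuadraticChar F a = (quadraticChar F a : ℂ) :=
  rfl

theorem complexQuadraticChar_isQuadratic : (complexQuadraticChar F).IsQuadratic :=
  (quadraticChar_isQuadratic F).comp _

theorem complexQuadraticChar_ne_one (hF : ringChar F ≠ 2) : complexQuadraticChar F ≠ 1 :=
  (MulChar.ringHomComp_ne_one_iff Int.cast_injective).mpr (quadraticChar_ne_one hF)

theorem complexQuadraticChar_mul_sq (a : F) {b : F} (hb : b ≠ 0) :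
    complexQuadraticChar F (a * b ^ 2) = complexQuadraticChar F a := by
  rw [complexQuadraticChar_apply, complexQuadraticChar_apply, map_mul, quadraticChar_sq_one' hb,
    mul_one]

variable {ψ : AddChar F ℂ}

theorem sum_addChar_sq (hF : ringChar F ≠ 2) (hψ : ψ.IsPrimitive) {a : F} (ha : a ≠ 0) :
    ∑ x, ψ (a * x ^ 2) = complexQuadraticChar F a * gaussSum (complexQuadraticChar F) ψ := by
  calc ∑ x, ψ (a * x ^ 2)
      = ∑ u, ∑ x with x ^ 2 = u, ψ (a * u) := by
        rw [← Finset.sum_fiberwise Finset.univ (fun x : F => x ^ 2)]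
        refine Finset.sum_congr rfl fun u _ => Finset.sum_congr rfl fun x hx => ?_
        rw [(Finset.mem_filter.mp hx).2]
    _ = ∑ u, (complexQuadraticChar F u * ψ.mulShift a u + ψ.mulShift a u) := by
        refine Finset.sum_congr rfl fun u _ => ?_
        have hcard : ((Finset.univ.filter fun x : F => x ^ 2 = u).card : ℂ) =
            complexQuadraticChar F u + 1 := by
          have := quadraticChar_card_sqrts hF u
          simp only [Set.toFinset_ofPred] at this
          rw [complexQuadraticChar_apply]
          exact_mod_cast this
        rw [Finset.sum_const, nsmul_eq_mul, hcard, AddChar.mulShift_apply]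
        ring
    _ = gaussSum (complexQuadraticChar F) (ψ.mulShift a) := by
        rw [Finset.sum_add_distrib, AddChar.sum_eq_zero_of_ne_one (hψ ha), add_zero, gaussSum]
    _ = complexQuadraticChar F a * gaussSum (complexQuadraticChar F) ψ := by
        rw [← Units.val_mk0 ha, gaussSum_mulShift_eq, complexQuadraticChar_isQuadratic.inv]

theorem sum_addChar_quadratic (hF : ringChar F ≠ 2) (hψ : ψ.IsPrimitive) {a : F} (ha : a ≠ 0)
    (b c : F) :
    ∑ x, ψ (a * x ^ 2 + b * x + c) =
      complexQuadraticChar F a * gaussSum (complexQuadraticChar F) ψ *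
        ψ (c - b ^ 2 / (4 * a)) := by
  have h2 : (2 : F) ≠ 0 := Ring.two_ne_zero hF
  have h4 : (4 : F) ≠ 0 := by simpa [show (4 : F) = 2 * 2 by norm_num] using h2
  rw [← sum_addChar_sq hF hψ ha, Finset.sum_mul]
  refine Fintype.sum_equiv (Equiv.addRight (b / (2 * a))) _ _ fun x => ?_
  rw [← AddChar.map_add_eq_mul, Equiv.coe_addRight]
  congr 1
  field_simp
  ring

theorem sum_addChar_affine (hψ : ψ.IsPrimitive) (b c : F) :
    ∑ x, ψ (b * x + c) = if b = 0 then Fintype.card F * ψ c else 0 := by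
  simp_rw [AddChar.map_add_eq_mul, mul_comm b]
  rw [← Finset.sum_mul, AddChar.sum_mulShift b hψ]
  split_ifs <;> simp

theorem gaussSum_ne_zero (hF : ringChar F ≠ 2) (hψ : ψ.IsPrimitive) :
    gaussSum (complexQuadraticChar F) ψ ≠ 0 :=
  gaussSum_ne_zero_of_nontrivial (Nat.cast_ne_zero.mpr Fintype.card_ne_zero)
    (complexQuadraticChar_ne_one hF) hψ

end QuadraticGaussSum

section SpecialLinearGroupTwo

open scoped MatrixGroups

/-- The Weyl element `(0, -1; 1, 0)` of `SL(2, R)`. -/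
def weylElement (R : Type*) [CommRing R] : SL(2, R) :=
  ⟨!![0, -1; 1, 0], by simp⟩

theorem coe_weylElement (R : Type*) [CommRing R] :
    (weylElement R : Matrix (Fin 2) (Fin 2) R) = !![0, -1; 1, 0] :=
  rfl

/-- The upper unitriangular element `(1, b; 0, 1)` of `SL(2, R)`. -/
def upperTransvection {R : Type*} [CommRing R] (b : R) : SL(2, R) :=
  SpecialLinearGroup.transvection zero_ne_one b

theorem coe_upperTransvection {R : Type*} [CommRing R] (b : R) :
    (upperTransvection b : Matrix (Fin 2) (Fin 2) R) = !![1, b; 0, 1] := by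
  ext i j
  fin_cases i <;> fin_cases j <;> simp [upperTransvection, SpecialLinearGroup.transvection_coe]

theorem weylElement_mul_self (R : Type*) [CommRing R] : weylElement R * weylElement R = -1 := by
  refine Subtype.ext ?_
  simp [coe_weylElement, Matrix.one_fin_two]

theorem coe_weylElement_mul {R : Type*} [CommRing R] (g : SL(2, R)) :
    ((weylElement R * g : SL(2, R)) : Matrix (Fin 2) (Fin 2) R) =
      !![-g 1 0, -g 1 1; g 0 0, g 0 1] := by
  ext i j
  fin_cases i <;> fin_cases j <;> simp [coe_weylElement, Matrix.mul_apply, Fin.sum_univ_two]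

theorem coe_upperTransvection_mul {R : Type*} [CommRing R] (b : R) (g : SL(2, R)) :
    ((upperTransvection b * g : SL(2, R)) : Matrix (Fin 2) (Fin 2) R) =
      !![g 0 0 + b * g 1 0, g 0 1 + b * g 1 1; g 1 0, g 1 1] := by
  ext i j
  fin_cases i <;> fin_cases j <;> simp [coe_upperTransvection, Matrix.mul_apply, Fin.sum_univ_two]

variable {F : Type*} [Field F]

theorem transvection_one_zero_eq (c : F) :
    SpecialLinearGroup.transvection (one_ne_zero : (1 : Fin 2) ≠ 0) c =
      weylElement F * upperTransvection (-c) *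
        (weylElement F * weylElement F * weylElement F) := by
  refine Subtype.ext ?_
  ext i j
  fin_cases i <;> fin_cases j <;>
    simp [coe_weylElement, coe_upperTransvection, SpecialLinearGroup.transvection_coe]

theorem weylElement_upperTransvection_induction {P : SL(2, F) → Prop} (hweyl : P (weylElement F))
    (htransvection : ∀ b, P (upperTransvection b))
    (hmul : ∀ g h, P g → P h → P (g * h)) (g : SL(2, F)) : P g := by
  refine SL2.transvection_induction P (fun i j hij c => ?_) hmul g
  obtain ⟨rfl, rfl⟩ | ⟨rfl, rfl⟩ : (i = 0 ∧ j = 1) ∨ (i = 1 ∧ j = 0) := by omega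
  · exact htransvection c
  · rw [transvection_one_zero_eq]
    exact hmul _ _ (hmul _ _ hweyl (htransvection _)) (hmul _ _ (hmul _ _ hweyl hweyl) hweyl)

theorem closure_weylElement_upperTransvection (p : ℕ) [Fact p.Prime] :
    Subgroup.closure {weylElement (ZMod p), upperTransvection 1} = ⊤ := by
  rw [Subgroup.eq_top_iff']
  refine weylElement_upperTransvection_induction (Subgroup.subset_closure (.inl rfl)) (fun b => ?_)
    fun _ _ => Subgroup.mul_mem _
  let T : Multiplicative (ZMod p) →* SL(2, ZMod p) :=
    .mk' (fun b => upperTransvection b.toAdd)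
      fun b c => SpecialLinearGroup.transvection_add _ _ _
  have hb : T (.ofAdd b) = T (.ofAdd 1) ^ b.val := by
    rw [← map_pow, ← ofAdd_nsmul, nsmul_one, ZMod.natCast_zmod_val]
  change T (.ofAdd b) ∈ _
  exact hb ▸ Subgroup.pow_mem _ (Subgroup.subset_closure (.inr rfl)) _

theorem eq_one_or_eq_neg_one_of_mem_center {g : SL(2, F)} (hg : g ∈ Subgroup.center SL(2, F)) :
    g = 1 ∨ g = -1 := by
  obtain ⟨r, hr, hrg⟩ := Matrix.SpecialLinearGroup.mem_center_iff.mp hg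
  rw [Fintype.card_fin, sq_eq_one_iff] at hr
  refine hr.imp (fun h => Subtype.ext ?_) fun h => Subtype.ext ?_ <;>
    simp [← hrg, h, ← smul_one_eq_diagonal]

theorem injective_of_map_neg_one_ne_one {H : Type*} [MulOneClass H]
    (hF : ∃ a : F, a ≠ 0 ∧ a ^ 2 ≠ 1) (f : SL(2, F) →* H) (hf : f (-1) ≠ 1) :
    Function.Injective f := by
  obtain ⟨a, ha, hasq⟩ := id hF
  have : Group.IsPerfect SL(2, F) := ⟨SL2.commutator_eq_top ha hasq⟩
  have : IsSimpleGroup (SL(2, F) ⧸ Subgroup.center SL(2, F)) :=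
    Matrix.ProjectiveSpecialLinearGroup.rank_two_simple' hF
  have hker : f.ker ≤ Subgroup.center SL(2, F) :=
    (le_center_or_eq_top_of_normal f.ker).resolve_right fun htop =>
      hf (MonoidHom.mem_ker.mp (htop ▸ Subgroup.mem_top (-1)))
  rw [← MonoidHom.ker_eq_bot_iff, eq_bot_iff]
  intro g hg
  obtain rfl | rfl := eq_one_or_eq_neg_one_of_mem_center (hker hg)
  · exact Subgroup.mem_bot.mpr rfl
  · exact absurd hg hf

end SpecialLinearGroupTwo

section WeilRepresentation

open scoped MatrixGroups

variable {F : Type*} [Field F] [Fintype F] [DecidableEq F] (ψ : AddChar F ℂ)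

/-- The Weil operator attached to `g = (a, b; c, d)` and the additive character `ψ`, as a matrix
indexed by `F`: for `c ≠ 0` it is the integral operator whose kernel is `ψ` evaluated at the
generating function `(a x² - 2 x y + d y²) / (2 c)` of `g`, and for `c = 0` it is a weighted
substitution. The normalisation by the quadratic Gauss sum makes `g ↦ weilMatrix ψ g` a genuine,
and not only a projective, representation. -/
def weilMatrix (g : SL(2, F)) : Matrix F F ℂ :=
  of fun x y =>
    if g 1 0 = 0 then
      if y = g 0 0 * x then complexQuadraticChar F (g 0 0) * ψ (g 0 0 * g 0 1 * x ^ 2 / 2) else 0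
    else
      complexQuadraticChar F (2 * g 1 0) / gaussSum (complexQuadraticChar F) ψ *
        ψ ((g 0 0 * x ^ 2 - 2 * x * y + g 1 1 * y ^ 2) / (2 * g 1 0))

variable {ψ}

theorem weilMatrix_apply_of_eq_zero {g : SL(2, F)} (hc : g 1 0 = 0) (x y : F) :
    weilMatrix ψ g x y = if y = g 0 0 * x then
      complexQuadraticChar F (g 0 0) * ψ (g 0 0 * g 0 1 * x ^ 2 / 2) else 0 :=
  if_pos hc

theorem weilMatrix_apply_of_ne_zero {g : SL(2, F)} (hc : g 1 0 ≠ 0) (x y : F) :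
    weilMatrix ψ g x y =
      complexQuadraticChar F (2 * g 1 0) / gaussSum (complexQuadraticChar F) ψ *
        ψ ((g 0 0 * x ^ 2 - 2 * x * y + g 1 1 * y ^ 2) / (2 * g 1 0)) :=
  if_neg hc

theorem weilMatrix_one : weilMatrix ψ 1 = 1 := by
  ext x y
  simp [weilMatrix_apply_of_eq_zero, Matrix.one_apply, eq_comm]

theorem weilMatrix_upperTransvection (b : F) :
    weilMatrix ψ (upperTransvection b) = diagonal fun x => ψ (b * x ^ 2 / 2) := by
  ext x y
  rw [weilMatrix_apply_of_eq_zero (by simp [coe_upperTransvection])]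
  simp [coe_upperTransvection, Matrix.diagonal_apply, eq_comm]

theorem weilMatrix_weylElement (hF : ringChar F ≠ 2) (x y : F) :
    weilMatrix ψ (weylElement F) x y =
      complexQuadraticChar F 2 / gaussSum (complexQuadraticChar F) ψ * ψ (-(x * y)) := by
  have h2 : (2 : F) ≠ 0 := Ring.two_ne_zero hF
  rw [weilMatrix_apply_of_ne_zero (by simp [coe_weylElement])]
  simp [coe_weylElement, neg_div, mul_assoc, h2]

theorem weilMatrix_upperTransvection_mul (hF : ringChar F ≠ 2) (b : F) (g : SL(2, F)) :
    weilMatrix ψ (upperTransvection b * g) =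
      weilMatrix ψ (upperTransvection b) * weilMatrix ψ g := by
  have h2 : (2 : F) ≠ 0 := Ring.two_ne_zero hF
  have hdet : g 0 0 * g 1 1 - g 0 1 * g 1 0 = 1 := (Matrix.det_fin_two _).symm.trans g.det_coe
  ext x y
  rw [weilMatrix_upperTransvection, diagonal_mul]
  by_cases hc : g 1 0 = 0
  · have hexponent : g 0 0 * (g 0 1 + b * g 1 1) * x ^ 2 / 2 =
        b * x ^ 2 / 2 + g 0 0 * g 0 1 * x ^ 2 / 2 := by
      linear_combination b * x ^ 2 / 2 * (hdet + g 0 1 * hc)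
    rw [weilMatrix_apply_of_eq_zero (by rwa [coe_upperTransvection_mul]),
      weilMatrix_apply_of_eq_zero hc, mul_ite, mul_zero, mul_left_comm, ← AddChar.map_add_eq_mul]
    simp [-Matrix.SpecialLinearGroup.coe_mul, coe_upperTransvection_mul, hc, hexponent]
  · have hexponent : ((g 0 0 + b * g 1 0) * x ^ 2 - 2 * x * y + g 1 1 * y ^ 2) / (2 * g 1 0) =
        b * x ^ 2 / 2 + (g 0 0 * x ^ 2 - 2 * x * y + g 1 1 * y ^ 2) / (2 * g 1 0) := by
      field_simp
      ring
    rw [weilMatrix_apply_of_ne_zero (by rwa [coe_upperTransvection_mul]),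
      weilMatrix_apply_of_ne_zero hc, mul_left_comm, ← AddChar.map_add_eq_mul]
    simp [-Matrix.SpecialLinearGroup.coe_mul, coe_upperTransvection_mul, hexponent]

theorem weilMatrix_weylElement_mul_of_eq_zero (hF : ringChar F ≠ 2) {g : SL(2, F)}
    (hc : g 1 0 = 0) :
    weilMatrix ψ (weylElement F * g) = weilMatrix ψ (weylElement F) * weilMatrix ψ g := by
  have h2 : (2 : F) ≠ 0 := Ring.two_ne_zero hF
  have hdet : g 0 0 * g 1 1 - g 0 1 * g 1 0 = 1 := (Matrix.det_fin_two _).symm.trans g.det_coe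
  have ha : g 0 0 ≠ 0 := by
    rintro ha
    simp [ha, hc] at hdet
  ext x y
  rw [mul_apply, Finset.sum_eq_single (y / g 0 0)]
  · have hexponent : (-g 1 0 * x ^ 2 - 2 * x * y + g 0 1 * y ^ 2) / (2 * g 0 0) =
        -(x * (y / g 0 0)) + g 0 0 * g 0 1 * (y / g 0 0) ^ 2 / 2 := by
      rw [hc]
      field_simp
      ring
    rw [weilMatrix_apply_of_ne_zero (by rwa [coe_weylElement_mul]),
      weilMatrix_weylElement hF, weilMatrix_apply_of_eq_zero hc, if_pos (by field_simp),
      mul_mul_mul_comm, ← AddChar.map_add_eq_mul, ← hexponent]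
    simp only [coe_weylElement_mul, of_apply, cons_val_zero, cons_val_one, cons_val', map_mul]
    ring
  · intro z _ hz
    rw [weilMatrix_apply_of_eq_zero hc, if_neg fun h => hz (by rw [h]; field_simp), mul_zero]
  · simp

theorem weilMatrix_weylElement_mul_apply_of_ne_zero (hF : ringChar F ≠ 2)
    {g : SL(2, F)} (hc : g 1 0 ≠ 0) (x y : F) :
    (weilMatrix ψ (weylElement F) * weilMatrix ψ g) x y =
      complexQuadraticChar F (g 1 0) / gaussSum (complexQuadraticChar F) ψ ^ 2 *
        ∑ z, ψ (g 0 0 / (2 * g 1 0) * z ^ 2 + -(x + y / g 1 0) * z +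
          g 1 1 * y ^ 2 / (2 * g 1 0)) := by
  have h2 : (2 : F) ≠ 0 := Ring.two_ne_zero hF
  have hchar : complexQuadraticChar F 2 * complexQuadraticChar F (2 * g 1 0) =
      complexQuadraticChar F (g 1 0) := by
    rw [← map_mul, ← complexQuadraticChar_mul_sq (g 1 0) h2]
    ring_nf
  rw [mul_apply, Finset.mul_sum]
  refine Finset.sum_congr rfl fun z _ => ?_
  rw [weilMatrix_weylElement hF, weilMatrix_apply_of_ne_zero hc, mul_mul_mul_comm,
    ← AddChar.map_add_eq_mul, div_mul_div_comm, hchar, ← sq]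
  congr 2
  field_simp
  ring

theorem weilMatrix_weylElement_mul_of_ne_zero_of_ne_zero (hF : ringChar F ≠ 2)
    (hψ : ψ.IsPrimitive) {g : SL(2, F)} (hc : g 1 0 ≠ 0) (ha : g 0 0 ≠ 0) :
    weilMatrix ψ (weylElement F * g) = weilMatrix ψ (weylElement F) * weilMatrix ψ g := by
  have h2 : (2 : F) ≠ 0 := Ring.two_ne_zero hF
  have hG := gaussSum_ne_zero hF hψ
  have hdet : g 0 0 * g 1 1 - g 0 1 * g 1 0 = 1 := (Matrix.det_fin_two _).symm.trans g.det_coe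
  ext x y
  have hchar : complexQuadraticChar F (g 1 0) * complexQuadraticChar F (g 0 0 / (2 * g 1 0)) =
      complexQuadraticChar F (2 * g 0 0) := by
    rw [← map_mul, ← complexQuadraticChar_mul_sq _ h2]
    congr 1
    field_simp
  have hexponent : (-g 1 0 * x ^ 2 - 2 * x * y + g 0 1 * y ^ 2) / (2 * g 0 0) =
      g 1 1 * y ^ 2 / (2 * g 1 0) -
        (-(x + y / g 1 0)) ^ 2 / (4 * (g 0 0 / (2 * g 1 0))) := by
    have h4 : (4 : F) ≠ 0 := by simpa [show (4 : F) = 2 * 2 by norm_num] using h2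
    field_simp
    linear_combination (-4) * y ^ 2 * hdet
  rw [weilMatrix_weylElement_mul_apply_of_ne_zero hF hc, sum_addChar_quadratic hF hψ
    (div_ne_zero ha (mul_ne_zero h2 hc)), ← hexponent,
    weilMatrix_apply_of_ne_zero (by rwa [coe_weylElement_mul])]
  simp only [coe_weylElement_mul, of_apply, cons_val_zero, cons_val_one]
  rw [← hchar]
  field_simp

theorem weilMatrix_weylElement_mul_of_ne_zero_of_eq_zero (hF : ringChar F ≠ 2)
    (hψ : ψ.IsPrimitive) {g : SL(2, F)} (hc : g 1 0 ≠ 0) (ha : g 0 0 = 0) :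
    weilMatrix ψ (weylElement F * g) = weilMatrix ψ (weylElement F) * weilMatrix ψ g := by
  have h2 : (2 : F) ≠ 0 := Ring.two_ne_zero hF
  have hneg : complexQuadraticChar F (-1) ≠ 0 := (isUnit_one.neg.map _).ne_zero
  ext x y
  have hsupport : -(x + y / g 1 0) = 0 ↔ y = -g 1 0 * x := by
    field_simp
    grind
  have hGsq : gaussSum (complexQuadraticChar F) ψ ^ 2 =
      complexQuadraticChar F (-1) * Fintype.card F :=
    gaussSum_sq (complexQuadraticChar_ne_one hF) complexQuadraticChar_isQuadratic hψ
  rw [weilMatrix_weylElement_mul_apply_of_ne_zero hF hc,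
    weilMatrix_apply_of_eq_zero (by rwa [coe_weylElement_mul])]
  simp only [coe_weylElement_mul, of_apply, cons_val_zero, cons_val_one, cons_val', ha, zero_div,
    zero_mul, zero_add, sum_addChar_affine hψ, hsupport]
  split_ifs with h
  · have hchar : complexQuadraticChar F (-g 1 0) =
        complexQuadraticChar F (g 1 0) / complexQuadraticChar F (-1) := by
      rw [eq_div_iff hneg, ← map_mul]
      ring_nf
    have hexponent : -g 1 0 * -g 1 1 * x ^ 2 / 2 = g 1 1 * y ^ 2 / (2 * g 1 0) := by
      rw [h]
      field_simp
    rw [hchar, hexponent, hGsq]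
    field_simp
  · simp

theorem weilMatrix_weylElement_mul (hF : ringChar F ≠ 2) (hψ : ψ.IsPrimitive) (g : SL(2, F)) :
    weilMatrix ψ (weylElement F * g) = weilMatrix ψ (weylElement F) * weilMatrix ψ g := by
  by_cases hc : g 1 0 = 0
  · exact weilMatrix_weylElement_mul_of_eq_zero hF hc
  by_cases ha : g 0 0 = 0
  · exact weilMatrix_weylElement_mul_of_ne_zero_of_eq_zero hF hψ hc ha
  · exact weilMatrix_weylElement_mul_of_ne_zero_of_ne_zero hF hψ hc ha

theorem weilMatrix_mul (hF : ringChar F ≠ 2) (hψ : ψ.IsPrimitive) (g h : SL(2, F)) :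
    weilMatrix ψ (g * h) = weilMatrix ψ g * weilMatrix ψ h := by
  induction g using weylElement_upperTransvection_induction generalizing h with
  | hweyl => exact weilMatrix_weylElement_mul hF hψ h
  | htransvection b => exact weilMatrix_upperTransvection_mul hF b h
  | hmul g g' hg hg' => rw [mul_assoc, hg, hg', hg, mul_assoc]

end WeilRepresentation

section OddPart

/-- The points `r i` are representatives of the pairs `{x, -x}` of nonzero elements of `A`: every
element of `A` is exactly once `0`, some `r i` or some `-r i`. -/
def IsHalfSystem {ι A : Type*} [AddGroup A] (r : ι → A) : Prop :=
  Function.Bijective fun o : Option (ι ⊕ ι) => o.elim 0 (Sum.elim r fun i => -r i)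

variable {ι A R : Type*} [AddGroup A] {r : ι → A}

theorem IsHalfSystem.injective (hr : IsHalfSystem r) : Function.Injective r :=
  (Function.Bijective.injective hr).comp ((Option.some_injective _).comp Sum.inl_injective)

theorem IsHalfSystem.ne_neg (hr : IsHalfSystem r) (i j : ι) : r i ≠ -r j :=
  (Function.Bijective.injective hr).ne (a₁ := some (.inl i)) (a₂ := some (.inr j)) (by simp)

theorem IsHalfSystem.sum_mul_of_odd [Fintype ι] [Fintype A] [NonUnitalNonAssocRing R]
    (hr : IsHalfSystem r) (a : A → R) {f : A → R} (hzero : f 0 = 0) (hodd : ∀ x, f (-x) = -f x) :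
    ∑ x, a x * f x = ∑ i, (a (r i) - a (-r i)) * f (r i) := by
  rw [← Function.Bijective.sum_comp hr, Fintype.sum_option, Fintype.sum_sum_type,
    ← Finset.sum_add_distrib]
  simp [hzero, hodd, add_mul, sub_eq_add_neg]

/-- The restriction of the operator with kernel `M` to odd functions, written in the coordinates
`f ↦ (f (r i))ᵢ` when `r` is a half system. -/
def oddPart [Sub R] (r : ι → A) (M : Matrix A A R) : Matrix ι ι R :=
  of fun i j => M (r i) (r j) - M (r i) (-r j)

theorem oddPart_apply [Sub R] (r : ι → A) (M : Matrix A A R) (i j : ι) :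
    oddPart r M i j = M (r i) (r j) - M (r i) (-r j) :=
  rfl

theorem oddPart_diagonal [DecidableEq ι] [DecidableEq A] [AddGroup R] (hr : IsHalfSystem r)
    (d : A → R) : oddPart r (diagonal d) = diagonal fun i => d (r i) := by
  ext i j
  rw [oddPart_apply, diagonal_apply_ne _ (hr.ne_neg i j), sub_zero]
  simp [Matrix.diagonal_apply, hr.injective.eq_iff]

theorem oddPart_one [DecidableEq ι] [DecidableEq A] [AddGroupWithOne R] (hr : IsHalfSystem r) :
    oddPart r (1 : Matrix A A R) = 1 := by
  rw [← diagonal_one, oddPart_diagonal hr, diagonal_one]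

theorem oddPart_mul [Fintype ι] [Fintype A] [NonUnitalNonAssocRing R] (hr : IsHalfSystem r)
    (M : Matrix A A R) {N : Matrix A A R} (hN : ∀ x y, N (-x) (-y) = N x y) :
    oddPart r (M * N) = oddPart r M * oddPart r N := by
  ext i j
  have hzero : N 0 (r j) - N 0 (-r j) = 0 := by rw [← hN 0 (r j), neg_zero, sub_self]
  have hodd (x : A) : N (-x) (r j) - N (-x) (-r j) = -(N x (r j) - N x (-r j)) := by
    rw [hN, ← hN x (-r j), neg_neg, neg_sub]
  rw [oddPart_apply, mul_apply, mul_apply, ← Finset.sum_sub_distrib]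
  simp_rw [← mul_sub]
  exact hr.sum_mul_of_odd (M (r i)) hzero hodd

end OddPart

section OddWeilRepresentation

open scoped MatrixGroups

variable {F ι : Type*} [Field F] [Fintype F] [DecidableEq F] [Fintype ι] [DecidableEq ι]
  {ψ : AddChar F ℂ} {r : ι → F}

theorem weilMatrix_neg_neg (g : SL(2, F)) (x y : F) :
    weilMatrix ψ g (-x) (-y) = weilMatrix ψ g x y := by
  simp [weilMatrix]

theorem weilMatrix_neg_one_apply (x y : F) :
    weilMatrix ψ (-1) x y = complexQuadraticChar F (-1) * (1 : Matrix F F ℂ) x (-y) := by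
  rw [weilMatrix_apply_of_eq_zero (by simp)]
  simp [Matrix.one_apply, eq_neg_iff_add_eq_zero, add_comm]

/-- The representation of `SL(2, F)` on odd functions obtained by restricting the Weil
representation. -/
def oddWeilRep (hF : ringChar F ≠ 2) (hψ : ψ.IsPrimitive) (hr : IsHalfSystem r) :
    SL(2, F) →* Matrix ι ι ℂ where
  toFun g := oddPart r (weilMatrix ψ g)
  map_one' := by rw [weilMatrix_one, oddPart_one hr]
  map_mul' g h := by rw [weilMatrix_mul hF hψ, oddPart_mul hr _ (weilMatrix_neg_neg h)]

variable (hF : ringChar F ≠ 2) (hψ : ψ.IsPrimitive) (hr : IsHalfSystem r)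

theorem oddWeilRep_upperTransvection (b : F) :
    oddWeilRep hF hψ hr (upperTransvection b) = diagonal fun i => ψ (b * r i ^ 2 / 2) :=
  (congrArg (oddPart r) (weilMatrix_upperTransvection b)).trans (oddPart_diagonal hr _)

theorem oddWeilRep_weylElement_apply (i j : ι) :
    oddWeilRep hF hψ hr (weylElement F) i j =
      complexQuadraticChar F 2 / gaussSum (complexQuadraticChar F) ψ *
        (ψ (-(r i * r j)) - ψ (r i * r j)) := by
  change weilMatrix ψ _ _ _ - weilMatrix ψ _ _ _ = _
  rw [weilMatrix_weylElement hF, weilMatrix_weylElement hF, ← mul_sub, mul_neg, neg_neg]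

theorem oddWeilRep_neg_one :
    oddWeilRep hF hψ hr (-1) = -complexQuadraticChar F (-1) • (1 : Matrix ι ι ℂ) := by
  ext i j
  change weilMatrix ψ _ _ _ - weilMatrix ψ _ _ _ = _
  rw [weilMatrix_neg_one_apply, weilMatrix_neg_one_apply, ← mul_sub, neg_neg, ← neg_sub,
    ← oddPart_apply, oddPart_one hr, Matrix.smul_apply, smul_eq_mul, mul_neg, neg_mul]

end OddWeilRepresentation

section TwistedRepresentation

variable {n R : Type*} [Fintype n] [DecidableEq n]

/-- The external tensor product of a matrix representation of `G` with a linear character of `H`,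
a representation of `G × H`. -/
def twist {G H : Type*} [Monoid G] [Monoid H] [CommSemiring R] (ρ : G →* Matrix n n R)
    (χ : H →* R) : G × H →* Matrix n n R where
  toFun x := χ x.2 • ρ x.1
  map_one' := by simp
  map_mul' x y := by simp [mul_smul, smul_comm (χ x.2)]

theorem twist_injective {G H : Type*} [Group G] [Group H] [CommRing R]
    {ρ : G →* Matrix n n R} {χ : H →* R} (hcard : (Nat.card H).Coprime (Fintype.card n))
    (hρ : Function.Injective ρ) (hdet : ∀ g, (ρ g).det = 1) (hχ : Function.Injective χ) :
    Function.Injective (twist ρ χ) := by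
  rw [injective_iff_map_eq_one]
  rintro ⟨g, h⟩ hgh
  have hgh : χ h • ρ g = 1 := hgh
  have hpow : h ^ Fintype.card n = 1 := hχ <| by
    rw [map_pow, map_one, ← mul_one (χ h ^ _), ← hdet g, ← det_smul, hgh,
      det_one, hdet]
  obtain rfl : h = 1 := (powCoprime hcard).injective (by simpa using hpow)
  rw [map_one, one_smul] at hgh
  rw [hρ (hgh.trans (map_one ρ).symm), Prod.mk_one_one]

end TwistedRepresentation

section SpecialLinearGroupCard

variable (n R : Type*) [Fintype n] [DecidableEq n] [CommRing R]

theorem range_toGL_eq_ker_det :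
    (Matrix.SpecialLinearGroup.toGL : SpecialLinearGroup n R →* GL n R).range =
      (GeneralLinearGroup.det : GL n R →* Rˣ).ker := by
  ext g
  refine ⟨?_, fun hg => ⟨⟨g, congrArg Units.val hg⟩, Units.ext rfl⟩⟩
  rintro ⟨s, rfl⟩
  exact Units.ext s.det_coe

theorem card_specialLinearGroup_mul_card_units [Nonempty n] :
    Nat.card (Matrix.SpecialLinearGroup n R) * Nat.card Rˣ = Nat.card (GL n R) := by
  have hdet : (GeneralLinearGroup.det : GL n R →* Rˣ).range = ⊤ :=
    MonoidHom.range_eq_top.mpr GeneralLinearGroup.det_surjective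
  rw [← Subgroup.card_mul_index (GeneralLinearGroup.det : GL n R →* Rˣ).ker, Subgroup.index_ker,
    hdet, Subgroup.card_top, ← range_toGL_eq_ker_det]
  exact congrArg (· * _)
    (Nat.card_range_of_injective Matrix.SpecialLinearGroup.toGL_injective).symm

end SpecialLinearGroupCard

section BlockEmbedding

/-- The block embedding `emb` as a monoid homomorphism. -/
def embHom : Matrix (Fin 2) (Fin 2) ℂ →* Matrix (Fin 3) (Fin 3) ℂ where
  toFun := emb
  map_one' := by
    ext i j
    fin_cases i <;> fin_cases j <;> simp [emb]
  map_mul' A B := by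
    ext i j
    fin_cases i <;> fin_cases j <;> simp [emb, Matrix.mul_apply, Fin.sum_univ_succ]

theorem eq_one_of_emb_eq_smul_one {A : Matrix (Fin 2) (Fin 2) ℂ} {c : ℂ}
    (h : emb A = c • 1) : A = 1 := by
  have hc : (1 : ℂ) = c := by simpa [emb] using congrFun₂ h 2 2
  rw [← hc, one_smul] at h
  ext i j
  fin_cases i <;> fin_cases j
  · simpa [emb] using congrFun₂ h 0 0
  · simpa [emb] using congrFun₂ h 0 1
  · simpa [emb] using congrFun₂ h 1 0
  · simpa [emb] using congrFun₂ h 1 1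

theorem mk_map_embHom_injective :
    Function.Injective ((QuotientGroup.mk' scalarSub).comp (Units.map embHom)) := by
  rw [injective_iff_map_eq_one]
  intro A hA
  obtain ⟨c, hc⟩ : Units.map embHom A ∈ scalarSub := (QuotientGroup.eq_one_iff _).mp hA
  refine Units.ext (eq_one_of_emb_eq_smul_one (c := c) ?_)
  rw [← Algebra.algebraMap_eq_smul_one]
  exact (congrArg Units.val hc).symm

theorem gen3_coe_image (T : Set (GL (Fin 3) ℂ)) :
    gen3 ((↑) '' T) = Subgroup.closure T := by
  rw [gen3]
  congr 1
  ext g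
  exact Units.val_injective.mem_set_image

end BlockEmbedding

section SpecialLinearGroupTwoFive

instance fact_prime_five : Fact (Nat.Prime 5) :=
  ⟨Nat.prime_five⟩

theorem card_SL25 : Nat.card SL25 = 120 := by
  have h := card_specialLinearGroup_mul_card_units (Fin 2) (ZMod 5)
  rw [Nat.card_units, Matrix.card_GL_field, Nat.card_zmod, ZMod.card, Fin.prod_univ_two] at h
  exact Nat.eq_of_mul_eq_mul_right (by decide : 0 < 4) h

theorem ringChar_zmod_five_ne_two : ringChar (ZMod 5) ≠ 2 := by
  rw [ZMod.ringChar_zmod_n]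
  decide

theorem isHalfSystem_one_three : IsHalfSystem (![1, 3] : Fin 2 → ZMod 5) := by
  unfold IsHalfSystem
  decide

/-- The two-dimensional representation of `SL(2, 5)` on odd functions on `ZMod 5` attached to the
additive character `x ↦ ζ₅ ^ x`. -/
def oddWeilRepSL25 : SL25 →* Matrix (Fin 2) (Fin 2) ℂ :=
  oddWeilRep ringChar_zmod_five_ne_two (ZMod.isPrimitive_stdAddChar 5) isHalfSystem_one_three

theorem stdAddChar_five_eq_pow (a : ZMod 5) : ZMod.stdAddChar a = zeta5 ^ a.val := by
  have hone : zeta5 = ZMod.stdAddChar (1 : ZMod 5) := by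
    simpa [zeta5] using (ZMod.stdAddChar_coe (N := 5) 1).symm
  rw [hone, ← AddChar.map_nsmul_eq_pow, nsmul_one, ZMod.natCast_zmod_val]

theorem complexQuadraticChar_five (a : ZMod 5) :
    complexQuadraticChar (ZMod 5) a = ((a ^ 2).valMinAbs : ℂ) := by
  have heuler : ∀ a : ZMod 5, quadraticChar (ZMod 5) a = (a ^ 2).valMinAbs := by decide
  rw [complexQuadraticChar_apply, heuler]

theorem gaussSum_five_eq_sqrt5 :
    gaussSum (complexQuadraticChar (ZMod 5)) ZMod.stdAddChar = sqrt5 := by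
  simp only [gaussSum, complexQuadraticChar_five, stdAddChar_five_eq_pow]
  refine (Fin.sum_univ_five _).trans ?_
  change ((0 : ℤ) : ℂ) * zeta5 ^ 0 + ((1 : ℤ) : ℂ) * zeta5 ^ 1 + ((-1 : ℤ) : ℂ) * zeta5 ^ 2 +
    ((-1 : ℤ) : ℂ) * zeta5 ^ 3 + ((1 : ℤ) : ℂ) * zeta5 ^ 4 = sqrt5
  push_cast
  rw [sqrt5]
  ring

theorem oddWeilRepSL25_weylElement :
    oddWeilRepSL25 (weylElement (ZMod 5)) =
      !![(zeta5 - zeta5 ^ 4) / sqrt5, (zeta5 ^ 3 - zeta5 ^ 2) / sqrt5;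
        (zeta5 ^ 3 - zeta5 ^ 2) / sqrt5, -((zeta5 - zeta5 ^ 4) / sqrt5)] := by
  have htwo : complexQuadraticChar (ZMod 5) 2 = -1 := by
    rw [complexQuadraticChar_five, show ((2 : ZMod 5) ^ 2).valMinAbs = -1 by decide, Int.cast_neg,
      Int.cast_one]
  have hpos : ∀ i j : Fin 2, (![1, 3] i * ![1, 3] j : ZMod 5).val = ![![1, 3], ![3, 4]] i j := by
    decide
  have hneg : ∀ i j : Fin 2, (-(![1, 3] i * ![1, 3] j) : ZMod 5).val = ![![4, 2], ![2, 1]] i j := by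
    decide
  have hsub (a b : ℂ) : -1 / sqrt5 * (a - b) = (b - a) / sqrt5 := by ring
  ext i j
  rw [oddWeilRepSL25, oddWeilRep_weylElement_apply, gaussSum_five_eq_sqrt5, htwo,
    stdAddChar_five_eq_pow, stdAddChar_five_eq_pow, hpos, hneg]
  fin_cases i <;> fin_cases j <;> simp [hsub, ← neg_div]

theorem oddWeilRepSL25_upperTransvection_one :
    oddWeilRepSL25 (upperTransvection 1) = diagonal ![zeta5 ^ 3, zeta5 ^ 2] := by
  have hhalf : ∀ i : Fin 2, (1 * ![1, 3] i ^ 2 : ZMod 5) = ![3, 2] i * 2 := by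
    decide
  refine (oddWeilRep_upperTransvection _ _ _ _).trans (congrArg diagonal (funext fun i => ?_))
  rw [(div_eq_iff (by decide)).mpr (hhalf i), stdAddChar_five_eq_pow]
  fin_cases i <;> rfl

theorem oddWeilRepSL25_neg_one : oddWeilRepSL25 (-1) = -1 := by
  have hneg : complexQuadraticChar (ZMod 5) (-1) = 1 := by
    rw [complexQuadraticChar_five, neg_one_sq, show (1 : ZMod 5).valMinAbs = 1 by decide,
      Int.cast_one]
  rw [oddWeilRepSL25, oddWeilRep_neg_one, hneg, neg_smul, one_smul]

theorem exists_ne_zero_sq_ne_one_zmod_five : ∃ a : ZMod 5, a ≠ 0 ∧ a ^ 2 ≠ 1 := by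
  decide

theorem oddWeilRepSL25_injective : Function.Injective oddWeilRepSL25 := by
  refine injective_of_map_neg_one_ne_one exists_ne_zero_sq_ne_one_zmod_five oddWeilRepSL25 ?_
  rw [oddWeilRepSL25_neg_one]
  intro h
  have := congrFun₂ h 0 0
  norm_num at this

theorem det_oddWeilRepSL25 (g : SL25) : (oddWeilRepSL25 g).det = 1 := by
  obtain ⟨a, ha, hasq⟩ := exists_ne_zero_sq_ne_one_zmod_five
  have : Group.IsPerfect SL25 := ⟨SL2.commutator_eq_top ha hasq⟩
  have hdet : (detMonoidHom.comp oddWeilRepSL25).toHomUnits = 1 := monoidHom_eq_one_of_isPerfect _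
  exact congrArg Units.val (DFunLike.congr_fun hdet g)

end SpecialLinearGroupTwoFive

section ProjectiveImage

theorem stdAddChar_fifteen_nine : ZMod.stdAddChar (9 : ZMod 15) = zeta5 ^ 3 := by
  have hnine : ZMod.stdAddChar (9 : ZMod 15) = Complex.exp (2 * Real.pi * Complex.I * 9 / 15) :=
    mod_cast ZMod.stdAddChar_coe (N := 15) 9
  rw [hnine, zeta5, ← Complex.exp_nat_mul]
  push_cast
  ring_nf

theorem exp_mul_stdAddChar_fifteen_seven :
    Complex.exp (2 * Real.pi * Complex.I / 30) * ZMod.stdAddChar (7 : ZMod 15) = -1 := by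
  have hseven : ZMod.stdAddChar (7 : ZMod 15) = Complex.exp (2 * Real.pi * Complex.I * 7 / 15) :=
    mod_cast ZMod.stdAddChar_coe (N := 15) 7
  rw [hseven, ← Complex.exp_add, ← Complex.exp_pi_mul_I]
  ring_nf

/-- The representation of `SL(2, 5) × ℤ/15` obtained by twisting `oddWeilRepSL25` with the
`15`-th roots of unity, placed in the upper left block of `GL(3, ℂ)`. -/
def blockRep : SL25 × Multiplicative (ZMod 15) →* GL (Fin 3) ℂ :=
  (Units.map embHom).comp (twist oddWeilRepSL25 (ZMod.stdAddChar (N := 15)).toMonoidHom).toHomUnits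

theorem coe_blockRep (g : SL25) (n : ZMod 15) :
    (blockRep (g, .ofAdd n) : Matrix (Fin 3) (Fin 3) ℂ) =
      emb (ZMod.stdAddChar n • oddWeilRepSL25 g) :=
  rfl

theorem card_multiplicative_zmod (n : ℕ) : Nat.card (Multiplicative (ZMod n)) = n :=
  Nat.card_zmod n

theorem mk_comp_blockRep_injective :
    Function.Injective ((QuotientGroup.mk' scalarSub).comp blockRep) := by
  have hchar : Function.Injective (ZMod.stdAddChar (N := 15)).toMonoidHom :=
    ZMod.injective_stdAddChar
  have hcard : (Nat.card (Multiplicative (ZMod 15))).Coprime (Fintype.card (Fin 2)) := by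
    rw [card_multiplicative_zmod, Fintype.card_fin]
    decide
  exact mk_map_embHom_injective.comp fun x y h =>
    twist_injective hcard oddWeilRepSL25_injective det_oddWeilRepSL25 hchar (congrArg Units.val h)

theorem sigma_eq_blockRep :
    sigma = blockRep (weylElement (ZMod 5), .ofAdd 0) := by
  rw [coe_blockRep, AddChar.map_zero_eq_one, one_smul, oddWeilRepSL25_weylElement]
  rfl

-- `oddWeilRepSL25` sends the transvection to `diag(ζ₅³, ζ₅²)`, and `ζ₅³ = exp(2πi · 9 / 15)`.
theorem tau_eq_blockRep : tau = blockRep (upperTransvection 1, .ofAdd 9) := by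
  have hzeta : zeta5 ^ 5 = 1 := by
    rw [zeta5, ← Complex.exp_nat_mul, ← Complex.exp_two_pi_mul_I]
    push_cast
    ring_nf
  have hsix : zeta5 ^ 3 * zeta5 ^ 3 = zeta5 := by linear_combination zeta5 * hzeta
  have hfive : zeta5 ^ 3 * zeta5 ^ 2 = 1 := by linear_combination hzeta
  rw [coe_blockRep, stdAddChar_fifteen_nine, oddWeilRepSL25_upperTransvection_one]
  ext i j
  fin_cases i <;> fin_cases j <;> simp [tau, emb, hsix, hfive]

-- Modulo scalars `λ₃₀` is `diag(ζ₃₀⁻¹, ζ₃₀⁻¹, 1)`, and `-ζ₃₀⁻¹ = exp(2πi · 7 / 15)`.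
theorem exists_mem_scalarSub_lambda30_eq :
    ∃ z ∈ scalarSub, lambda30 = ((z * blockRep (-1, .ofAdd 7) : GL (Fin 3) ℂ) : Matrix _ _ ℂ) := by
  refine ⟨_, ⟨Units.mk0 _ (Complex.exp_ne_zero (2 * Real.pi * Complex.I / 30)), rfl⟩, ?_⟩
  rw [Units.val_mul, coe_blockRep, oddWeilRepSL25_neg_one, Units.coe_map, Units.val_mk0]
  change _ = algebraMap ℂ (Matrix (Fin 3) (Fin 3) ℂ) _ * _
  rw [← Algebra.smul_def]
  ext i j
  fin_cases i <;> fin_cases j <;> simp [lambda30, emb, exp_mul_stdAddChar_fifteen_seven]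

theorem closure_generators_eq_top :
    Subgroup.closure {((weylElement (ZMod 5), .ofAdd 0) : SL25 × Multiplicative (ZMod 15)),
      (upperTransvection 1, .ofAdd 9), (-1, .ofAdd 7)} = ⊤ := by
  refine eq_top_of_map_fst_eq_top ?_ fun n => ?_
  · rw [MonoidHom.map_closure, eq_top_iff, ← closure_weylElement_upperTransvection 5]
    refine Subgroup.closure_mono ?_
    rintro _ (rfl | rfl)
    · exact ⟨_, .inl rfl, rfl⟩
    · exact ⟨_, .inr (.inl rfl), rfl⟩
  · have hseven : ((1 : SL25), Multiplicative.ofAdd (7 : ZMod 15)) =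
        (weylElement (ZMod 5), .ofAdd 0) * (weylElement (ZMod 5), .ofAdd 0) * (-1, .ofAdd 7) := by
      simp [weylElement_mul_self]
    have hgen : ∀ n : ZMod 15, n = (13 * n.val) • 7 := by decide
    have hpow : ((1 : SL25), n) = ((1 : SL25), .ofAdd (7 : ZMod 15)) ^ (13 * n.toAdd.val) := by
      rw [Prod.pow_mk, one_pow, ← ofAdd_nsmul, ← hgen, ofAdd_toAdd]
    rw [hpow, hseven]
    exact pow_mem (mul_mem (mul_mem (Subgroup.subset_closure (.inl rfl))
      (Subgroup.subset_closure (.inl rfl))) (Subgroup.subset_closure (.inr (.inr rfl)))) _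

theorem map_mk_Gt30 :
    Gt30.map (QuotientGroup.mk' scalarSub) =
      ((QuotientGroup.mk' scalarSub).comp blockRep).range := by
  obtain ⟨z, hz, hlambda⟩ := exists_mem_scalarSub_lambda30_eq
  have hGt30 : Gt30 = Subgroup.closure {blockRep (weylElement (ZMod 5), .ofAdd 0),
      blockRep (upperTransvection 1, .ofAdd 9), z * blockRep (-1, .ofAdd 7)} := by
    rw [Gt30, sigma_eq_blockRep, tau_eq_blockRep, hlambda, ← gen3_coe_image]
    simp only [Set.image_insert_eq, Set.image_singleton]
  have hmk : (z : PGL3) = 1 := (QuotientGroup.eq_one_iff z).mpr hz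
  rw [hGt30, MonoidHom.range_eq_map, ← closure_generators_eq_top, MonoidHom.map_closure,
    MonoidHom.map_closure]
  simp only [Set.image_insert_eq, Set.image_singleton, MonoidHom.comp_apply, map_mul,
    QuotientGroup.mk'_apply, hmk, one_mul]

end ProjectiveImage

theorem stmt12 :
    Nat.card (Gt30.map (QuotientGroup.mk' scalarSub)) = 1800 ∧
    Nonempty (Gt30.map (QuotientGroup.mk' scalarSub) ≃*
      SL25 × Multiplicative (ZMod 15)) := by
  let e : Gt30.map (QuotientGroup.mk' scalarSub) ≃* SL25 × Multiplicative (ZMod 15) :=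
    (MulEquiv.subgroupCongr map_mk_Gt30).trans
      (MonoidHom.ofInjective mk_comp_blockRep_injective).symm
  refine ⟨?_, ⟨e⟩⟩
  rw [Nat.card_congr e.toEquiv, Nat.card_prod, card_SL25, card_multiplicative_zmod]
end
end

section
/- Every element of the subgroup ⟨σ, τ, λ₃₀⟩ ⊆ GL(3,ℂ) maps the zero set {(x,y,z) ∈ ℂ³ : z³⁰ + F₃₀(x,y) = 0} onto itself; equivalently, the polynomial Z³⁰ + F₃₀(X,Y) is invariant up to a nonzero scalar under the linear substitution of variables by each of σ, τ, λ₃₀. -/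
noncomputable section
open Matrix

open MvPolynomial

/-- `G = Z³⁰ + F₃₀(X, Y)` with `X = X 0`, `Y = X 1`, `Z = X 2`. -/
def G30 : MvPolynomial (Fin 3) ℂ :=
  X 2 ^ 30 +
    (X 0 ^ 30 + 522 * (X 0 ^ 25 * X 1 ^ 5 - X 0 ^ 5 * X 1 ^ 25)
      - 10005 * (X 0 ^ 20 * X 1 ^ 10 + X 0 ^ 10 * X 1 ^ 20) + X 1 ^ 30)

/-- The action of a `3 × 3` matrix on `ℂ[X, Y, Z]` by linear substitution of variables. -/
def act3 (A : Matrix (Fin 3) (Fin 3) ℂ) (P : MvPolynomial (Fin 3) ℂ) : MvPolynomial (Fin 3) ℂ :=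
  aeval (fun i => C (A i 0) * X 0 + C (A i 1) * X 1 + C (A i 2) * X 2) P

/-
Put `v = x² + y²`, `s = x² - y²`, `u = xy`. Then `F₃₀ = v * E(s, u)` with `E` homogeneous of degree
14. The upper block of `σ` is symmetric of the form `(a, b; b, -a)` with `a² + b² = -1` and
`b² - a² = ab`, so it acts on these quadratic forms by `v ↦ -v`, `s ↦ ab(4u - s)` and
`u ↦ ab(s + u)`, where `5(ab)² = 1`. The invariance of `F₃₀` under `σ` thus reduces to the identity
`E(4u - s, s + u) = -5⁷ * E(s, u)` over `ℤ`. The matrix `τ` fixes `F₃₀`, which is a form in `x⁵` and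
`y⁵`, and `λ₃₀` only multiplies `Z` by a 30th root of unity.
-/

section Form

variable {R : Type*} [CommRing R]

/-- The icosahedral form `F₃₀` of degree 30, encoded as a function on a commutative ring rather than
as a polynomial, so that its symmetries are ring identities. -/
def F30 (x y : R) : R :=
  x ^ 30 + 522 * (x ^ 25 * y ^ 5 - x ^ 5 * y ^ 25)
    - 10005 * (x ^ 20 * y ^ 10 + x ^ 10 * y ^ 20) + y ^ 30

/-- The cofactor of `x² + y²` in `F₃₀`, written in `s = x² - y²` and `u = xy`. With `p = x⁵` and
`q = y⁵`, the form `F₃₀` is `p² + q²` times `(p² - q²)² + 522 pq(p² - q²) - 10004 (pq)²`; here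
`p² + q²` is `x² + y²` times the first factor below, and `p² - q² = s⁵ + 5s³u² + 5su⁴`. -/
def F30Cofactor (s u : R) : R :=
  (s ^ 4 + 3 * s ^ 2 * u ^ 2 + u ^ 4) *
    ((s ^ 5 + 5 * s ^ 3 * u ^ 2 + 5 * s * u ^ 4) ^ 2
      + 522 * u ^ 5 * (s ^ 5 + 5 * s ^ 3 * u ^ 2 + 5 * s * u ^ 4) - 10004 * u ^ 10)

lemma F30_eq_mul_F30Cofactor (x y : R) :
    F30 x y = (x ^ 2 + y ^ 2) * F30Cofactor (x ^ 2 - y ^ 2) (x * y) := by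
  unfold F30 F30Cofactor
  ring

lemma F30Cofactor_mul_sub_mul_add (m s u : R) :
    F30Cofactor (m * (4 * u - s)) (m * (s + u)) = -(5 * m ^ 2) ^ 7 * F30Cofactor s u := by
  unfold F30Cofactor
  ring

lemma F30_add_sub {a b : R} (hadd : a ^ 2 + b ^ 2 = -1) (hsub : b ^ 2 - a ^ 2 = a * b) (x y : R) :
    F30 (a * x + b * y) (b * x - a * y) = F30 x y := by
  have hv : (a * x + b * y) ^ 2 + (b * x - a * y) ^ 2 = -(x ^ 2 + y ^ 2) := by
    linear_combination (x ^ 2 + y ^ 2) * hadd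
  have hs : (a * x + b * y) ^ 2 - (b * x - a * y) ^ 2 =
      a * b * (4 * (x * y) - (x ^ 2 - y ^ 2)) := by
    linear_combination (y ^ 2 - x ^ 2) * hsub
  have hu : (a * x + b * y) * (b * x - a * y) = a * b * ((x ^ 2 - y ^ 2) + x * y) := by
    linear_combination x * y * hsub
  have hab : 5 * (a * b) ^ 2 = 1 := by
    linear_combination (a ^ 2 + b ^ 2 - 1) * hadd - (b ^ 2 - a ^ 2 + a * b) * hsub
  rw [F30_eq_mul_F30Cofactor, hv, hs, hu, F30Cofactor_mul_sub_mul_add, hab,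
    F30_eq_mul_F30Cofactor]
  ring

lemma F30_mul_left_of_pow_five_eq_one {ζ : R} (hζ : ζ ^ 5 = 1) (x y : R) :
    F30 (ζ * x) y = F30 x y := by
  have hpow (k : ℕ) : (ζ * x) ^ (5 * k) = x ^ (5 * k) := by
    rw [mul_pow, pow_mul ζ, hζ, one_pow, one_mul]
  simp only [F30, hpow 1, hpow 2, hpow 4, hpow 5, hpow 6]

end Form

lemma isPrimitiveRoot_zeta5 : IsPrimitiveRoot zeta5 5 :=
  Complex.isPrimitiveRoot_exp 5 (by norm_num)

lemma zeta5_geom_sum : 1 + zeta5 + zeta5 ^ 2 + zeta5 ^ 3 + zeta5 ^ 4 = 0 := by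
  simpa [Finset.sum_range_succ] using isPrimitiveRoot_zeta5.geom_sum_eq_zero (by norm_num)

lemma sqrt5_sq : sqrt5 ^ 2 = 5 := by
  unfold sqrt5
  linear_combination (zeta5 ^ 3 - 2 * zeta5 ^ 2 - zeta5 + 4) * isPrimitiveRoot_zeta5.pow_eq_one
    - zeta5_geom_sum

lemma sigma_entries_sq_add_sq :
    ((zeta5 - zeta5 ^ 4) / sqrt5) ^ 2 + ((zeta5 ^ 3 - zeta5 ^ 2) / sqrt5) ^ 2 = -1 := by
  rw [div_pow, div_pow, ← add_div, sqrt5_sq, div_eq_iff (by norm_num)]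
  linear_combination (zeta5 ^ 3 + zeta5 - 4) * isPrimitiveRoot_zeta5.pow_eq_one + zeta5_geom_sum

lemma sigma_entries_sq_sub_sq :
    ((zeta5 ^ 3 - zeta5 ^ 2) / sqrt5) ^ 2 - ((zeta5 - zeta5 ^ 4) / sqrt5) ^ 2 =
      (zeta5 - zeta5 ^ 4) / sqrt5 * ((zeta5 ^ 3 - zeta5 ^ 2) / sqrt5) := by
  rw [div_pow, div_pow, ← sub_div, div_mul_div_comm, ← sq]
  congr 1
  linear_combination (zeta5 ^ 2 - zeta5 ^ 3) * isPrimitiveRoot_zeta5.pow_eq_one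

lemma eval_act3 (A : Matrix (Fin 3) (Fin 3) ℂ) (P : MvPolynomial (Fin 3) ℂ) (v : Fin 3 → ℂ) :
    eval v (act3 A P) = eval (A *ᵥ v) P := by
  have hrow : (fun i => eval v (C (A i 0) * X 0 + C (A i 1) * X 1 + C (A i 2) * X 2)) = A *ᵥ v := by
    ext i
    simp [mulVec, dotProduct, Fin.sum_univ_three]
  rw [act3, ← aeval_eq_eval, ← bind₁, aeval_bind₁]
  simp only [aeval_eq_eval, hrow]

section LinearSubstitution

variable {S : Set (Matrix (Fin 3) (Fin 3) ℂ)} {P : MvPolynomial (Fin 3) ℂ}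

lemma act3_eq_self_of_eval_mulVec {A : Matrix (Fin 3) (Fin 3) ℂ}
    (h : ∀ v, eval (A *ᵥ v) P = eval v P) : act3 A P = P :=
  MvPolynomial.funext fun v => (eval_act3 A P v).trans (h v)

lemma eval_mulVec_eq_zero_iff_of_mem_gen3
    (hS : ∀ A ∈ S, ∃ c : ℂ, c ≠ 0 ∧ act3 A P = C c * P) {g : GL (Fin 3) ℂ} (hg : g ∈ gen3 S)
    (v : Fin 3 → ℂ) : eval (g.val *ᵥ v) P = 0 ↔ eval v P = 0 := by
  unfold gen3 at hg
  induction hg using Subgroup.closure_induction generalizing v with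
  | mem g hg =>
    obtain ⟨c, hc, hcP⟩ := hS _ hg
    rw [← eval_act3, hcP, map_mul, eval_C, mul_eq_zero_iff_left hc]
  | one => simp
  | mul g h _ _ ihg ihh => rw [Units.val_mul, ← mulVec_mulVec, ihg, ihh]
  | inv g _ ih => rw [← ih, mulVec_mulVec, Units.mul_inv, one_mulVec]

lemma image_mulVec_zeros_of_mem_gen3
    (hS : ∀ A ∈ S, ∃ c : ℂ, c ≠ 0 ∧ act3 A P = C c * P) {g : GL (Fin 3) ℂ} (hg : g ∈ gen3 S) :
    (fun v => g.val *ᵥ v) '' {v | eval v P = 0} = {v | eval v P = 0} := by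
  have hleft : Function.LeftInverse (fun v => (g⁻¹).val *ᵥ v) (fun v => g.val *ᵥ v) := fun v => by
    simp only [mulVec_mulVec, Units.inv_mul, one_mulVec]
  have hright : Function.RightInverse (fun v => (g⁻¹).val *ᵥ v) (fun v => g.val *ᵥ v) := fun v => by
    simp only [mulVec_mulVec, Units.mul_inv, one_mulVec]
  rw [Set.image_eq_preimage_of_inverse hleft hright]
  exact Set.ext (eval_mulVec_eq_zero_iff_of_mem_gen3 hS (inv_mem hg))

end LinearSubstitution

lemma eval_G30 (v : Fin 3 → ℂ) : eval v G30 = v 2 ^ 30 + F30 (v 0) (v 1) := by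
  simp [G30, F30]

lemma act3_sigma_G30 : act3 sigma G30 = G30 := by
  refine act3_eq_self_of_eval_mulVec fun v => ?_
  rw [eval_G30, eval_G30, ← F30_add_sub sigma_entries_sq_add_sq sigma_entries_sq_sub_sq (v 0)]
  simp [sigma, vecHead, vecTail, sub_eq_add_neg]

lemma act3_tau_G30 : act3 tau G30 = G30 := by
  refine act3_eq_self_of_eval_mulVec fun v => ?_
  rw [eval_G30, eval_G30,
    ← F30_mul_left_of_pow_five_eq_one isPrimitiveRoot_zeta5.pow_eq_one (v 0)]
  simp [tau, mulVec_diagonal]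

lemma act3_lambda30_G30 : act3 lambda30 G30 = G30 := by
  have hpow : Complex.exp (2 * Real.pi * Complex.I / 30) ^ 30 = 1 :=
    (Complex.isPrimitiveRoot_exp 30 (by norm_num)).pow_eq_one
  refine act3_eq_self_of_eval_mulVec fun v => ?_
  simp [eval_G30, lambda30, mulVec_diagonal, mul_pow, hpow]

theorem stmt13 :
    (∀ g ∈ Gt30,
      (fun v => ((g : GL (Fin 3) ℂ) : Matrix (Fin 3) (Fin 3) ℂ).mulVec v) ''
          {v : Fin 3 → ℂ | eval v G30 = 0} = {v : Fin 3 → ℂ | eval v G30 = 0}) ∧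
    (∀ A ∈ ({sigma, tau, lambda30} : Set (Matrix (Fin 3) (Fin 3) ℂ)),
      ∃ c : ℂ, c ≠ 0 ∧ act3 A G30 = C c * G30) := by
  have hinv : ∀ A ∈ ({sigma, tau, lambda30} : Set (Matrix (Fin 3) (Fin 3) ℂ)),
      act3 A G30 = G30 := by
    rintro A (rfl | rfl | rfl)
    exacts [act3_sigma_G30, act3_tau_G30, act3_lambda30_G30]
  have hsemi : ∀ A ∈ ({sigma, tau, lambda30} : Set (Matrix (Fin 3) (Fin 3) ℂ)),
      ∃ c : ℂ, c ≠ 0 ∧ act3 A G30 = C c * G30 := fun A hA =>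
    ⟨1, one_ne_zero, by rw [hinv A hA, C_1, one_mul]⟩
  exact ⟨fun _ hg => image_mulVec_zeros_of_mem_gen3 hsemi hg, hsemi⟩
end
end
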